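/- arXiv:2412.10185 — 6 statements merged into one kernel-verified Lean document; each statement's English description precedes it below -/
import Mathlib

section
/- Let n ≥ 1 and let Q₁, Q₂ be n×n real matrices and r, v₁, v₂ : Fin n → ℝ vectors with v₁ = r + Q₁ v₁ and v₂ = r + Q₂ v₂. Suppose I − Q₁ is invertible and write M = (I − Q₁)⁻¹. Assume: (i) every entry of M satisfies 0 ≤ M i j ≤ c; (ii) for every row i, ∑_j |Q₁ i j − Q₂ i j| ≤ ε; (iii) |v₂ j| ≤ B for all j. Then |v₁ i − v₂ i| ≤ n · c · ε · B for every i. -/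
/-!
Subtracting the two fixed-point equations gives the resolvent identity
`v₁ - v₂ = (1 - Q₁)⁻¹ (Q₁ - Q₂) v₂`. The `L∞` operator norm, i.e. the largest row sum of absolute
values, is submultiplicative, so the right-hand side has norm at most
`‖(1 - Q₁)⁻¹‖ * ‖Q₁ - Q₂‖ * ‖v₂‖`, where a matrix with entries bounded by `c` has norm at most
`n * c`.
-/

open scoped Matrix Matrix.Norms.Operator

section LinftyOpNorm

variable {m n α : Type*} [Fintype m] [Fintype n] [SeminormedAddCommGroup α]
  {A : Matrix m n α}

theorem linfty_opNorm_le_iff {b : ℝ} (hb : 0 ≤ b) :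
    ‖A‖ ≤ b ↔ ∀ i, ∑ j, ‖A i j‖ ≤ b := by
  lift b to NNReal using hb
  rw [Matrix.linfty_opNorm_def, NNReal.coe_le_coe, Finset.sup_le_iff]
  simp only [Finset.mem_univ, true_imp_iff, ← NNReal.coe_le_coe, NNReal.coe_sum, coe_nnnorm]

theorem linfty_opNorm_le_card_mul {c : ℝ} (hc : 0 ≤ c) (hA : ∀ i j, ‖A i j‖ ≤ c) :
    ‖A‖ ≤ Fintype.card n * c := by
  refine (linfty_opNorm_le_iff (by positivity)).2 fun i ↦ ?_
  simpa only [nsmul_eq_mul, Finset.card_univ] using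
    Finset.sum_le_card_nsmul Finset.univ (fun j ↦ ‖A i j‖) c fun j _ ↦ hA i j

end LinftyOpNorm

section FixedPoint

variable {ι R : Type*} [Fintype ι] [DecidableEq ι] {Q₁ Q₂ M : Matrix ι ι R} {r v₁ v₂ : ι → R}

theorem sub_eq_mulVec_of_eq_add_mulVec [Ring R]
    (h₁ : v₁ = r + Q₁ *ᵥ v₁) (h₂ : v₂ = r + Q₂ *ᵥ v₂) (hM : M * (1 - Q₁) = 1) :
    v₁ - v₂ = M *ᵥ ((Q₁ - Q₂) *ᵥ v₂) := by
  have difference_eq : (1 - Q₁) *ᵥ (v₁ - v₂) = (Q₁ - Q₂) *ᵥ v₂ := by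
    have hr₁ : v₁ - Q₁ *ᵥ v₁ = r := sub_eq_of_eq_add h₁
    have hr₂ : v₂ - Q₂ *ᵥ v₂ = r := sub_eq_of_eq_add h₂
    calc
      (1 - Q₁) *ᵥ (v₁ - v₂) = (v₁ - Q₁ *ᵥ v₁) - (v₂ - Q₁ *ᵥ v₂) := by
        simp only [Matrix.mulVec_sub, Matrix.sub_mulVec, Matrix.one_mulVec]
      _ = (v₂ - Q₂ *ᵥ v₂) - (v₂ - Q₁ *ᵥ v₂) := by rw [hr₁, hr₂]
      _ = (Q₁ - Q₂) *ᵥ v₂ := by rw [Matrix.sub_mulVec, sub_sub_sub_cancel_left]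
  rw [← difference_eq, Matrix.mulVec_mulVec, hM, Matrix.one_mulVec]

variable [SeminormedRing R]

theorem norm_sub_le_of_eq_add_mulVec
    (h₁ : v₁ = r + Q₁ *ᵥ v₁) (h₂ : v₂ = r + Q₂ *ᵥ v₂) (hM : M * (1 - Q₁) = 1) :
    ‖v₁ - v₂‖ ≤ ‖M‖ * ‖Q₁ - Q₂‖ * ‖v₂‖ := by
  calc
    ‖v₁ - v₂‖ = ‖M *ᵥ ((Q₁ - Q₂) *ᵥ v₂)‖ := by rw [sub_eq_mulVec_of_eq_add_mulVec h₁ h₂ hM]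
    _ ≤ ‖M‖ * ‖(Q₁ - Q₂) *ᵥ v₂‖ := Matrix.linfty_opNorm_mulVec ..
    _ ≤ ‖M‖ * (‖Q₁ - Q₂‖ * ‖v₂‖) := by gcongr; exact Matrix.linfty_opNorm_mulVec ..
    _ = ‖M‖ * ‖Q₁ - Q₂‖ * ‖v₂‖ := (mul_assoc ..).symm

theorem stmt_1_general
    (h₁ : v₁ = r + Q₁ *ᵥ v₁) (h₂ : v₂ = r + Q₂ *ᵥ v₂) (hM : M * (1 - Q₁) = 1)
    {c ε B : ℝ} (hc : ∀ i j, ‖M i j‖ ≤ c) (hε : ∀ i, ∑ j, ‖Q₁ i j - Q₂ i j‖ ≤ ε)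
    (hB : ∀ j, ‖v₂ j‖ ≤ B) (i : ι) :
    ‖v₁ i - v₂ i‖ ≤ Fintype.card ι * c * ε * B := by
  have c_nonneg : 0 ≤ c := (norm_nonneg _).trans (hc i i)
  have ε_nonneg : 0 ≤ ε := (Finset.sum_nonneg fun _ _ ↦ norm_nonneg _).trans (hε i)
  have B_nonneg : 0 ≤ B := (norm_nonneg _).trans (hB i)
  calc
    ‖v₁ i - v₂ i‖ ≤ ‖v₁ - v₂‖ := norm_le_pi_norm (v₁ - v₂) i
    _ ≤ ‖M‖ * ‖Q₁ - Q₂‖ * ‖v₂‖ := norm_sub_le_of_eq_add_mulVec h₁ h₂ hM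
    _ ≤ Fintype.card ι * c * ε * B := by
      gcongr
      · exact linfty_opNorm_le_card_mul c_nonneg hc
      · exact (linfty_opNorm_le_iff ε_nonneg).2 hε
      · exact (pi_norm_le_iff_of_nonneg B_nonneg).2 hB

end FixedPoint

/-- Quantitative perturbation bound for linear fixed-point equations. -/
theorem stmt_1 (n : ℕ) (hn : 1 ≤ n)
    (Q₁ Q₂ : Matrix (Fin n) (Fin n) ℝ) (r v₁ v₂ : Fin n → ℝ)
    (h1 : v₁ = r + Q₁.mulVec v₁) (h2 : v₂ = r + Q₂.mulVec v₂)
    (hinv : IsUnit (1 - Q₁))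
    (M : Matrix (Fin n) (Fin n) ℝ) (hM : M = (1 - Q₁)⁻¹)
    (c : ℝ) (hMc : ∀ i j, 0 ≤ M i j ∧ M i j ≤ c)
    (ε : ℝ) (hrow : ∀ i, ∑ j, |Q₁ i j - Q₂ i j| ≤ ε)
    (B : ℝ) (hv₂ : ∀ j, |v₂ j| ≤ B) :
    ∀ i, |v₁ i - v₂ i| ≤ n * c * ε * B := by
  have M_mul : M * (1 - Q₁) = 1 := by
    rw [hM, Matrix.nonsing_inv_mul _ ((Matrix.isUnit_iff_isUnit_det _).1 hinv)]
  simpa only [Fintype.card_fin, Real.norm_eq_abs] using stmt_1_general h1 h2 M_mul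
    (fun i j ↦ (abs_of_nonneg (hMc i j).1).trans_le (hMc i j).2) hrow hv₂
end

section
/- Let n ≥ 1, let q : Fin n → ℝ be in the standard probability simplex, and let L : Fin n → ℝ. Set L̄ = (∑ i L i)/n, x i = L i − L̄, and assume x ≠ 0. Let ζ > 0 and write ‖x‖ = √(∑ i (x i)²). Assume q i + ζ · x i / ‖x‖ ≥ 0 for all i, and define p* i = q i + ζ · x i / ‖x‖. Then: (a) p* lies in the standard probability simplex; (b) √(∑ i (p* i − q i)²) = ζ; (c) for every p in the standard probability simplex with √(∑ i (p i − q i)²) ≤ ζ one has ∑ i p i · L i ≤ ∑ i p* i · L i = ∑ i q i · L i + ζ‖x‖. -/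
/-!
Since `p` and `q` have the same total mass, `p - q` is orthogonal to the constants, so against
`p - q` the objective `L` may be replaced by its centering `x`. Cauchy–Schwarz then bounds the gain
over `q` by `ζ‖x‖`, with equality when `p - q` is the nonnegative multiple of `x` of
norm `ζ`.
-/

open scoped RealInnerProductSpace
open Fintype WithLp

section InnerProductSpace

variable {E : Type*} [NormedAddCommGroup E] [InnerProductSpace ℝ E] {p q u x : E} {r : ℝ}

theorem inner_le_inner_add_mul_norm_of_norm_sub_le (hpq : ‖p - q‖ ≤ r)
    (horth : ⟪p - q, u - x⟫ = 0) :
    ⟪p, u⟫ ≤ ⟪q, u⟫ + r * ‖x‖ := by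
  have hcenter : ⟪p - q, u⟫ = ⟪p - q, x⟫ := by rwa [inner_sub_right, sub_eq_zero] at horth
  calc ⟪p, u⟫ = ⟪q, u⟫ + ⟪p - q, x⟫ := by rw [← hcenter, inner_sub_left]; ring
    _ ≤ ⟪q, u⟫ + ‖p - q‖ * ‖x‖ := by gcongr; exact real_inner_le_norm _ _
    _ ≤ ⟪q, u⟫ + r * ‖x‖ := by gcongr

theorem inner_add_mul_inv_norm_smul (q : E) (r : ℝ) (horth : ⟪x, u - x⟫ = 0) :
    ⟪q + (r * ‖x‖⁻¹) • x, u⟫ = ⟪q, u⟫ + r * ‖x‖ := by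
  have hxu : ⟪x, u⟫ = ‖x‖ * ‖x‖ := by
    rwa [inner_sub_right, sub_eq_zero, real_inner_self_eq_norm_mul_norm] at horth
  rw [inner_add_left, real_inner_smul_left, hxu, mul_assoc, ← mul_assoc ‖x‖⁻¹,
    inv_mul_mul_self]

end InnerProductSpace

section FiniteSums

variable {ι : Type*} [Fintype ι]

theorem sum_mul_eq_inner_toLp (f g : ι → ℝ) : ∑ i, f i * g i = ⟪toLp 2 f, toLp 2 g⟫ := by
  simp [PiLp.inner_apply, mul_comm]

theorem sqrt_sum_sq_eq_norm_toLp (f : ι → ℝ) : √(∑ i, f i ^ 2) = ‖toLp 2 f‖ := by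
  simp [EuclideanSpace.norm_eq]

theorem inner_toLp_sub_balance_eq_zero {v : ι → ℝ} (hv : ∑ i, v i = 0) (f : ι → ℝ) :
    ⟪toLp 2 v, toLp 2 f - toLp 2 (balance f)⟫ = 0 := by
  rw [← toLp_sub, ← sum_mul_eq_inner_toLp]
  simp [balance, ← Finset.sum_mul, hv]

theorem stmt_5_general (q L x : ι → ℝ) (hx : ∀ i, x i = L i - (∑ j, L j) / card ι) (hx0 : x ≠ 0)
    {ζ : ℝ} (hζ : 0 ≤ ζ) (pstar : ι → ℝ)
    (hpstar : ∀ i, pstar i = q i + ζ * x i / √(∑ j, x j ^ 2)) :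
    ∑ i, pstar i = ∑ i, q i ∧
    √(∑ i, (pstar i - q i) ^ 2) = ζ ∧
    (∀ p : ι → ℝ, ∑ i, p i = ∑ i, q i → √(∑ i, (p i - q i) ^ 2) ≤ ζ →
      ∑ i, p i * L i ≤ ∑ i, pstar i * L i) ∧
    ∑ i, pstar i * L i = ∑ i, q i * L i + ζ * √(∑ j, x j ^ 2) := by
  obtain rfl : x = balance L := by
    ext i
    rw [hx, balance_apply, expect_eq_sum_div_card]
  have hsum : ∑ i, balance L i = 0 := sum_balance L
  have hupdate : toLp 2 pstar = toLp 2 q + (ζ * ‖toLp 2 (balance L)‖⁻¹) • toLp 2 (balance L) := by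
    ext i
    simp only [hpstar, sqrt_sum_sq_eq_norm_toLp, PiLp.add_apply, PiLp.smul_apply, smul_eq_mul]
    ring
  have hvalue : ∑ i, pstar i * L i = ∑ i, q i * L i + ζ * √(∑ j, balance L j ^ 2) := by
    rw [sqrt_sum_sq_eq_norm_toLp, sum_mul_eq_inner_toLp, sum_mul_eq_inner_toLp, hupdate]
    exact inner_add_mul_inv_norm_smul _ _ (inner_toLp_sub_balance_eq_zero hsum L)
  refine ⟨?mass, ?radius, fun p hmass hball ↦ ?maximal, hvalue⟩
  case mass =>
    simp only [hpstar, Finset.sum_add_distrib, ← Finset.sum_div, ← Finset.mul_sum, hsum, mul_zero,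
      zero_div, add_zero]
  case radius =>
    have hx_ne : toLp 2 (balance L) ≠ 0 := (toLp_eq_zero 2).not.mpr hx0
    calc √(∑ i, (pstar i - q i) ^ 2) = ‖toLp 2 (pstar - q)‖ :=
          sqrt_sum_sq_eq_norm_toLp (pstar - q)
      _ = ‖(ζ * ‖toLp 2 (balance L)‖⁻¹) • toLp 2 (balance L)‖ := by
        rw [toLp_sub, hupdate, add_sub_cancel_left]
      _ = ζ := norm_smul_inv_norm' (𝕜 := ℝ) hζ hx_ne
  case maximal =>
    have hdiff : ∑ i, (p - q) i = 0 := by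
      simp only [Pi.sub_apply, Finset.sum_sub_distrib, hmass, sub_self]
    have hdist : ‖toLp 2 p - toLp 2 q‖ ≤ ζ :=
      (sqrt_sum_sq_eq_norm_toLp (p - q)).symm.trans_le hball
    rw [hvalue, sqrt_sum_sq_eq_norm_toLp, sum_mul_eq_inner_toLp, sum_mul_eq_inner_toLp]
    exact inner_le_inner_add_mul_norm_of_norm_sub_le hdist
      (inner_toLp_sub_balance_eq_zero hdiff L)

end FiniteSums

/-- Closed-form maximizer of a linear objective over an `L²`-ball of radius `ζ`
around a distribution `q`, intersected with the probability simplex. -/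
theorem stmt_5 (n : ℕ) (hn : 1 ≤ n)
    (q : Fin n → ℝ) (hq : q ∈ stdSimplex ℝ (Fin n))
    (L : Fin n → ℝ)
    (x : Fin n → ℝ) (hx : ∀ i, x i = L i - (∑ j, L j) / n)
    (hx0 : x ≠ 0)
    (ζ : ℝ) (hζ : 0 < ζ)
    (hnn : ∀ i, 0 ≤ q i + ζ * x i / Real.sqrt (∑ j, x j ^ 2))
    (pstar : Fin n → ℝ)
    (hpstar : ∀ i, pstar i = q i + ζ * x i / Real.sqrt (∑ j, x j ^ 2)) :
    pstar ∈ stdSimplex ℝ (Fin n) ∧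
    Real.sqrt (∑ i, (pstar i - q i) ^ 2) = ζ ∧
    (∀ p ∈ stdSimplex ℝ (Fin n), Real.sqrt (∑ i, (p i - q i) ^ 2) ≤ ζ →
      ∑ i, p i * L i ≤ ∑ i, pstar i * L i) ∧
    ∑ i, pstar i * L i = ∑ i, q i * L i + ζ * Real.sqrt (∑ j, x j ^ 2) := by
  obtain ⟨hmass, hradius, hmax, hvalue⟩ :=
    stmt_5_general q L x (by simpa only [card_fin] using hx) hx0 hζ.le pstar hpstar
  exact ⟨⟨fun i ↦ hpstar i ▸ hnn i, hmass.trans hq.2⟩, hradius,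
    fun p hp ↦ hmax p (hp.2.trans hq.2.symm), hvalue⟩
end

section
/- Let n ≥ 1, let q be in the standard probability simplex over Fin n, and let L : Fin n → ℝ. Let i⁺ be an index attaining max_i L i and i⁻ an index attaining min_i L i, with i⁺ ≠ i⁻. Let ζ ≥ 0 satisfy ζ/2 ≤ q i⁻ and q i⁺ + ζ/2 ≤ 1. Define p* by p* i⁺ = q i⁺ + ζ/2, p* i⁻ = q i⁻ − ζ/2, and p* i = q i otherwise. Then p* lies in the standard probability simplex, ∑ i |p* i − q i| = ζ, and for every p in the standard probability simplex with ∑ i |p i − q i| ≤ ζ one has ∑ i p i · L i ≤ ∑ i p* i · L i = ∑ i q i · L i + (ζ/2)(max_i L i − min_i L i). -/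
/-!
Write `d = p - q`. Since `∑ i, d i = 0`, the values `L` may be centred at the midpoint of their
range `[m, M]` without changing `∑ i, d i * L i`. The centred values are at most `(M - m) / 2` in
absolute value, so `∑ i, d i * L i ≤ (∑ i, |d i|) * (M - m) / 2`. A transfer of mass from a
minimizer of `L` to a maximizer attains this bound.
-/

section CentredBound

variable {ι R : Type*} [CommRing R] [LinearOrder R] [IsStrictOrderedRing R]

theorem two_mul_sum_mul_le_sum_abs_mul_sub {s : Finset ι} {d L : ι → R} {m M : R}
    (hd : ∑ i ∈ s, d i = 0) (hm : ∀ i ∈ s, m ≤ L i) (hM : ∀ i ∈ s, L i ≤ M) :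
    2 * ∑ i ∈ s, d i * L i ≤ (∑ i ∈ s, |d i|) * (M - m) := by
  have abs_centred_le : ∀ i ∈ s, |2 * L i - (M + m)| ≤ M - m := fun i hi ↦
    abs_le.2 ⟨by linarith [hm i hi], by linarith [hM i hi]⟩
  calc 2 * ∑ i ∈ s, d i * L i
      = 2 * ∑ i ∈ s, d i * L i - (∑ i ∈ s, d i) * (M + m) := by rw [hd, zero_mul, sub_zero]
    _ = ∑ i ∈ s, d i * (2 * L i - (M + m)) := by
        rw [Finset.mul_sum, Finset.sum_mul, ← Finset.sum_sub_distrib]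
        exact Finset.sum_congr rfl fun i _ ↦ by ring
    _ ≤ ∑ i ∈ s, |d i| * (M - m) := Finset.sum_le_sum fun i hi ↦
        calc d i * (2 * L i - (M + m))
            ≤ |d i| * |2 * L i - (M + m)| := (le_abs_self _).trans_eq (abs_mul _ _)
          _ ≤ |d i| * (M - m) := mul_le_mul_of_nonneg_left (abs_centred_le i hi) (abs_nonneg _)
    _ = (∑ i ∈ s, |d i|) * (M - m) := (Finset.sum_mul ..).symm

end CentredBound

/-- The weight function obtained from `q` by moving mass `c` from the coordinate `j` to the
coordinate `i`. Nothing prevents the weight at `j` from becoming negative, and `i = j` leaves `q`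
unchanged. -/
def massTransfer {ι R : Type*} [DecidableEq ι] [AddGroup R] (q : ι → R) (i j : ι) (c : R) : ι → R :=
  q + Pi.single i c - Pi.single j c

namespace massTransfer

variable {ι R : Type*} [DecidableEq ι]

theorem eq_of_apply [AddGroup R] {p q : ι → R} {i j : ι} {c : R} (hij : i ≠ j)
    (hi : p i = q i + c) (hj : p j = q j - c) (hk : ∀ k, k ≠ i → k ≠ j → p k = q k) :
    p = massTransfer q i j c := by
  funext k
  rcases eq_or_ne k i with rfl | hki
  · simp [massTransfer, hi, hij]
  rcases eq_or_ne k j with rfl | hkj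
  · simp [massTransfer, hj, hki]
  · simp [massTransfer, hk k hki hkj, hki, hkj]

theorem nonneg [AddCommGroup R] [PartialOrder R] [IsOrderedAddMonoid R] {q : ι → R} (hq : 0 ≤ q)
    (i : ι) {j : ι} {c : R} (hc : 0 ≤ c) (hcj : c ≤ q j) : 0 ≤ massTransfer q i j c := by
  have single_le : Pi.single j c ≤ q := update_le_iff.2 ⟨hcj, fun k _ ↦ hq k⟩
  have single_nonneg : 0 ≤ (Pi.single i c : ι → R) := Pi.single_nonneg.2 hc
  exact sub_nonneg.2 (single_le.trans (le_add_of_nonneg_right single_nonneg))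

variable [Fintype ι]

theorem sum_mul [CommRing R] (q L : ι → R) (i j : ι) (c : R) :
    ∑ k, massTransfer q i j c k * L k = ∑ k, q k * L k + c * (L i - L j) := by
  change massTransfer q i j c ⬝ᵥ L = q ⬝ᵥ L + c * (L i - L j)
  rw [massTransfer, sub_dotProduct, add_dotProduct, single_dotProduct, single_dotProduct]
  ring

theorem sum_eq [AddCommGroup R] (q : ι → R) (i j : ι) (c : R) :
    ∑ k, massTransfer q i j c k = ∑ k, q k := by
  simp [massTransfer, Finset.sum_add_distrib]

theorem mem_stdSimplex [CommRing R] [PartialOrder R] [IsOrderedRing R] {q : ι → R}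
    (hq : q ∈ stdSimplex R ι) (i : ι) {j : ι} {c : R} (hc : 0 ≤ c) (hcj : c ≤ q j) :
    massTransfer q i j c ∈ stdSimplex R ι :=
  ⟨nonneg hq.1 i hc hcj, (sum_eq q i j c).trans hq.2⟩

theorem sum_abs_sub [AddCommGroup R] [LinearOrder R] [IsOrderedAddMonoid R]
    (q : ι → R) {i j : ι} (hij : i ≠ j) (c : R) :
    ∑ k, |massTransfer q i j c k - q k| = 2 • |c| := by
  have abs_sub_eq : ∀ k, |massTransfer q i j c k - q k| =
      (Pi.single i |c| : ι → R) k + (Pi.single j |c| : ι → R) k := by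
    intro k
    rcases eq_or_ne k i with rfl | hki
    · simp [massTransfer, hij]
    rcases eq_or_ne k j with rfl | hkj
    · simp [massTransfer, hki]
    · simp [massTransfer, hki, hkj]
  simp only [abs_sub_eq, Finset.sum_add_distrib, Finset.sum_pi_single', Finset.mem_univ, if_true,
    two_nsmul]

theorem sum_mul_le [CommRing R] [LinearOrder R] [IsStrictOrderedRing R] {p q L : ι → R}
    {i j : ι} {c : R} (hi : ∀ k, L k ≤ L i) (hj : ∀ k, L j ≤ L k)
    (hsum : ∑ k, p k = ∑ k, q k) (hdist : ∑ k, |p k - q k| ≤ 2 * c) :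
    ∑ k, p k * L k ≤ ∑ k, massTransfer q i j c k * L k := by
  have gain_le : 2 * ∑ k, (p k - q k) * L k ≤ 2 * (c * (L i - L j)) :=
    calc 2 * ∑ k, (p k - q k) * L k
        ≤ (∑ k, |p k - q k|) * (L i - L j) :=
          two_mul_sum_mul_le_sum_abs_mul_sub (by rw [Finset.sum_sub_distrib, hsum, sub_self])
            (fun k _ ↦ hj k) (fun k _ ↦ hi k)
      _ ≤ 2 * c * (L i - L j) := mul_le_mul_of_nonneg_right hdist (sub_nonneg.2 (hi j))
      _ = 2 * (c * (L i - L j)) := mul_assoc ..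
  rw [sum_mul, ← sub_le_iff_le_add', ← Finset.sum_sub_distrib]
  simpa only [sub_mul] using le_of_mul_le_mul_left gain_le two_pos

end massTransfer

theorem stmt_7_general {ι R : Type*} [Fintype ι] [DecidableEq ι]
    [CommRing R] [LinearOrder R] [IsStrictOrderedRing R] {q : ι → R} (hq : q ∈ stdSimplex R ι)
    {L : ι → R} {i j : ι} (hi : ∀ k, L k ≤ L i) (hj : ∀ k, L j ≤ L k) (hij : i ≠ j)
    {c : R} (hc : 0 ≤ c) (hcj : c ≤ q j) :
    massTransfer q i j c ∈ stdSimplex R ι ∧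
    ∑ k, |massTransfer q i j c k - q k| = 2 * c ∧
    (∀ p : ι → R, ∑ k, p k = 1 → ∑ k, |p k - q k| ≤ 2 * c →
      ∑ k, p k * L k ≤ ∑ k, massTransfer q i j c k * L k) ∧
    ∑ k, massTransfer q i j c k * L k = ∑ k, q k * L k + c * (L i - L j) := by
  refine ⟨massTransfer.mem_stdSimplex hq i hc hcj, ?_, fun p hp hdist ↦ ?_,
    massTransfer.sum_mul q L i j c⟩
  · rw [massTransfer.sum_abs_sub q hij, abs_of_nonneg hc, two_nsmul, two_mul]
  · exact massTransfer.sum_mul_le hi hj (hp.trans hq.2.symm) hdist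

/-- Correctness of the greedy maximizer over an `L¹`-ball around a distribution `q`:
move `ζ/2` mass to a highest-value coordinate and remove `ζ/2` mass from a
lowest-value coordinate. -/
theorem stmt_7 (n : ℕ) (hn : 1 ≤ n)
    (q : Fin n → ℝ) (hq : q ∈ stdSimplex ℝ (Fin n))
    (L : Fin n → ℝ)
    (iplus iminus : Fin n)
    (hplus : ∀ i, L i ≤ L iplus) (hminus : ∀ i, L iminus ≤ L i)
    (hne : iplus ≠ iminus)
    (ζ : ℝ) (hζ : 0 ≤ ζ) (hlow : ζ / 2 ≤ q iminus) (hhigh : q iplus + ζ / 2 ≤ 1)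
    (pstar : Fin n → ℝ)
    (hp1 : pstar iplus = q iplus + ζ / 2)
    (hp2 : pstar iminus = q iminus - ζ / 2)
    (hp3 : ∀ i, i ≠ iplus → i ≠ iminus → pstar i = q i) :
    pstar ∈ stdSimplex ℝ (Fin n) ∧
    (∑ i, |pstar i - q i|) = ζ ∧
    (∀ p ∈ stdSimplex ℝ (Fin n), (∑ i, |p i - q i|) ≤ ζ →
      ∑ i, p i * L i ≤ ∑ i, pstar i * L i) ∧
    ∑ i, pstar i * L i = ∑ i, q i * L i + (ζ / 2) * (L iplus - L iminus) := by
  obtain rfl := massTransfer.eq_of_apply hne hp1 hp2 hp3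
  obtain ⟨hmem, hdist, hmax, hval⟩ := stmt_7_general hq hplus hminus hne (by positivity) hlow
  rw [mul_div_cancel₀ ζ two_ne_zero] at hdist hmax
  exact ⟨hmem, hdist, fun p hp ↦ hmax p hp.2, hval⟩
end

section
/- Let n ≥ 1 and let l, u : Fin n → ℝ with 0 ≤ l i ≤ u i for all i, ∑ i l i ≤ 1, and ∑ i u i ≥ 1. Let K = { p : Fin n → ℝ | ∀ i, l i ≤ p i ≤ u i, and ∑ i p i = 1 } and let L : Fin n → ℝ. Then there exist p* ∈ K and a threshold θ ∈ ℝ such that p* maximizes ∑ i p i · L i over K, and for every index i: if L i > θ then p* i = u i, and if L i < θ then p* i = l i. -/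
/-!
Raise the coordinates from `l` to `u` level by level, in decreasing order of their weight. The total
mass climbs from `∑ i, l i` to `∑ i, u i`, so at some level `θ` it passes the prescribed value, and
the coordinates of weight exactly `θ` can be chosen between their bounds so as to attain it.
The resulting `q` is optimal because every competitor `p` of the same mass satisfies
`∑ i, q i * w i - ∑ i, p i * w i = ∑ i, (q i - p i) * (w i - θ)`, whose terms are nonnegative.
-/

open Finset
open scoped Pointwise

variable {ι α M R : Type*}

/-- The interval uncertainty set: vectors of total mass `c` with coordinatewise bounds `l` and `u`.
The probability constraint is the case `c = 1`. -/
def intervalSet [Fintype ι] [AddCommMonoid M] [LE M] (l u : ι → M) (c : M) : Set (ι → M) :=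
  {p | (∀ i, l i ≤ p i ∧ p i ≤ u i) ∧ ∑ i, p i = c}

/-- The vector `p` follows the threshold policy for the weights `w` at level `θ`: it sits at its
upper bound where the weight exceeds `θ` and at its lower bound where the weight is below `θ`.
Coordinates of weight exactly `θ` are unconstrained. -/
def IsThresholdPolicy [LT α] (l u : ι → M) (w : ι → α) (θ : α) (p : ι → M) : Prop :=
  ∀ i, (θ < w i → p i = u i) ∧ (w i < θ → p i = l i)

section IntervalSums

variable [AddCommMonoid M] [LinearOrder M] [IsOrderedAddMonoid M] [AddLeftReflectLE M]
  [ExistsAddOfLE M]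

theorem sum_Icc_eq_Icc_sum (s : Finset ι) {a b : ι → M} (hab : ∀ i ∈ s, a i ≤ b i) :
    ∑ i ∈ s, Set.Icc (a i) (b i) = Set.Icc (∑ i ∈ s, a i) (∑ i ∈ s, b i) := by
  induction s using Finset.cons_induction with
  | empty => simp only [sum_empty, Set.Icc_self, Set.singleton_zero]
  | cons i s hi ih =>
    obtain ⟨habi, habs⟩ := forall_mem_cons hi _ |>.mp hab
    simp only [sum_cons, ih habs, Set.Icc_add_Icc habi (sum_le_sum habs)]

theorem intervalSet_nonempty [Fintype ι] {l u : ι → M} {c : M}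
    (hlu : ∀ i, l i ≤ u i) (hl : ∑ i, l i ≤ c) (hu : c ≤ ∑ i, u i) :
    (intervalSet l u c).Nonempty := by
  have hc : c ∈ ∑ i, Set.Icc (l i) (u i) := by
    rw [sum_Icc_eq_Icc_sum univ fun i _ ↦ hlu i]
    exact ⟨hl, hu⟩
  obtain ⟨p, hp, hpc⟩ := (Set.mem_fintype_sum _ _).mp hc
  exact ⟨p, hp, hpc⟩

end IntervalSums

theorem exists_forall_lt_iff_le [Finite ι] [LinearOrder α] {w : ι → α} {a : α}
    (h : ∃ i, a < w i) : ∃ j, ∀ i, a < w i ↔ w j ≤ w i := by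
  obtain ⟨j, hj, hmin⟩ := Set.exists_min_image {i | a < w i} w (Set.toFinite _) h
  exact ⟨j, fun i ↦ ⟨hmin i, hj.trans_le⟩⟩

theorem exists_sum_ite_lt_le_and_le_sum_ite_le [Fintype ι] [Nonempty ι] [LinearOrder α]
    [AddCommMonoid M] [LinearOrder M] {l u : ι → M} {c : M} (w : ι → α)
    (hl : ∑ i, l i ≤ c) (hu : c ≤ ∑ i, u i) :
    ∃ θ, ∑ i, (if θ < w i then u i else l i) ≤ c ∧ c ≤ ∑ i, if θ ≤ w i then u i else l i := by
  let levels : Set ι := {k | c ≤ ∑ i, if w k ≤ w i then u i else l i}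
  have levels_nonempty : levels.Nonempty := by
    obtain ⟨m, hm⟩ := Finite.exists_min w
    exact ⟨m, by simpa only [levels, Set.mem_ofPred_eq, hm, if_true] using hu⟩
  obtain ⟨k, hk, hmax⟩ := Set.exists_max_image levels w levels.toFinite levels_nonempty
  refine ⟨w k, ?_, hk⟩
  by_cases hnext : ∃ j, w k < w j
  · obtain ⟨j, hj⟩ := exists_forall_lt_iff_le hnext
    have hj_notMem : j ∉ levels := fun hmem ↦ (hmax j hmem).not_gt ((hj j).mpr le_rfl)
    simpa only [hj] using (not_le.mp hj_notMem).le
  · simpa only [not_exists.mp hnext, if_false] using hl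

theorem exists_mem_intervalSet_isThresholdPolicy [Fintype ι] [Nonempty ι] [LinearOrder α]
    [AddCommMonoid M] [LinearOrder M] [IsOrderedAddMonoid M] [AddLeftReflectLE M]
    [ExistsAddOfLE M] {l u : ι → M} {c : M}
    (hlu : ∀ i, l i ≤ u i) (hl : ∑ i, l i ≤ c) (hu : c ≤ ∑ i, u i) (w : ι → α) :
    ∃ θ, ∃ p ∈ intervalSet l u c, IsThresholdPolicy l u w θ p := by
  obtain ⟨θ, hθl, hθu⟩ := exists_sum_ite_lt_le_and_le_sum_ite_le w hl hu
  -- These bounds agree with `l` and `u` at weight `θ` and force the policy at all other weights.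
  let lower : ι → M := fun i ↦ if θ < w i then u i else l i
  let upper : ι → M := fun i ↦ if θ ≤ w i then u i else l i
  have l_le_lower (i : ι) : l i ≤ lower i := by grind
  have lower_le_upper (i : ι) : lower i ≤ upper i := by grind
  have upper_le_u (i : ι) : upper i ≤ u i := by grind
  obtain ⟨p, hp, hpc⟩ := intervalSet_nonempty lower_le_upper hθl hθu
  have l_le_p (i : ι) : l i ≤ p i := (l_le_lower i).trans (hp i).1
  have p_le_u (i : ι) : p i ≤ u i := (hp i).2.trans (upper_le_u i)
  refine ⟨θ, p, ⟨fun i ↦ ⟨l_le_p i, p_le_u i⟩, hpc⟩, fun i ↦ ⟨fun hi ↦ ?_, fun hi ↦ ?_⟩⟩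
  · exact (p_le_u i).antisymm (by simpa only [lower, if_pos hi] using (hp i).1)
  · exact le_antisymm (by simpa only [upper, if_neg hi.not_ge] using (hp i).2) (l_le_p i)

theorem IsThresholdPolicy.isMaxOn_sum_mul [Fintype ι] [Ring R] [LinearOrder R] [IsOrderedRing R]
    {l u w q : ι → R} {θ : R} (hq : IsThresholdPolicy l u w θ q) :
    IsMaxOn (fun p ↦ ∑ i, p i * w i) (intervalSet l u (∑ i, q i)) q := by
  rintro p ⟨hp, hpq⟩
  have term_nonneg (i : ι) : 0 ≤ (q i - p i) * (w i - θ) := by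
    rcases lt_trichotomy (w i) θ with hi | hi | hi
    · rw [(hq i).2 hi]
      exact mul_nonneg_of_nonpos_of_nonpos (sub_nonpos.mpr (hp i).1) (sub_nonpos.mpr hi.le)
    · rw [hi, sub_self, mul_zero]
    · rw [(hq i).1 hi]
      exact mul_nonneg (sub_nonneg.mpr (hp i).2) (sub_nonneg.mpr hi.le)
  have gap_eq : ∑ i, (q i - p i) * (w i - θ) = ∑ i, q i * w i - ∑ i, p i * w i := by
    simp only [mul_sub, sub_mul, sum_sub_distrib, ← sum_mul, hpq, sub_self, sub_zero]
  exact sub_nonneg.mp (gap_eq ▸ sum_nonneg fun i _ ↦ term_nonneg i)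

theorem stmt_8_general [Fintype ι] [Ring R] [LinearOrder R] [IsOrderedRing R]
    {l u : ι → R} {c : R} (hlu : ∀ i, l i ≤ u i) (hl : ∑ i, l i ≤ c) (hu : c ≤ ∑ i, u i)
    (w : ι → R) :
    ∃ q ∈ intervalSet l u c, ∃ θ,
      IsMaxOn (fun p ↦ ∑ i, p i * w i) (intervalSet l u c) q ∧ IsThresholdPolicy l u w θ q := by
  cases isEmpty_or_nonempty ι
  · obtain ⟨q, hq⟩ := intervalSet_nonempty hlu hl hu
    have hθ : IsThresholdPolicy l u w 0 q := isEmptyElim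
    exact ⟨q, hq, 0, hq.2 ▸ hθ.isMaxOn_sum_mul, hθ⟩
  · obtain ⟨θ, q, hq, hθ⟩ := exists_mem_intervalSet_isThresholdPolicy hlu hl hu w
    exact ⟨q, hq, θ, hq.2 ▸ hθ.isMaxOn_sum_mul, hθ⟩

/-- Ordering-maximization for interval (rectangular) uncertainty sets: a linear objective
over the polytope of distributions with coordinatewise bounds `l ≤ p ≤ u` is maximized
by a threshold policy. -/
theorem stmt_8 (n : ℕ) (hn : 1 ≤ n)
    (l u : Fin n → ℝ) (hlu : ∀ i, 0 ≤ l i ∧ l i ≤ u i)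
    (hl : ∑ i, l i ≤ 1) (hu : 1 ≤ ∑ i, u i)
    (L : Fin n → ℝ) :
    ∃ pstar ∈ {p : Fin n → ℝ | (∀ i, l i ≤ p i ∧ p i ≤ u i) ∧ ∑ i, p i = 1},
      ∃ θ : ℝ,
        (∀ p ∈ {p : Fin n → ℝ | (∀ i, l i ≤ p i ∧ p i ≤ u i) ∧ ∑ i, p i = 1},
          ∑ i, p i * L i ≤ ∑ i, pstar i * L i) ∧
        ∀ i, (θ < L i → pstar i = u i) ∧ (L i < θ → pstar i = l i) :=
  stmt_8_general (fun i ↦ (hlu i).2) hl hu L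
end

section
/- Let S be a finite nonempty type, for each s ∈ S let A(s) be a nonempty finite set of actions, for each s and a ∈ A(s) let 𝒫(s,a) be a nonempty set of probability distributions on S, let r(s,a) ∈ ℝ, and let γ ∈ [0,1]. Define the robust Bellman operator T by (T V)(s) = max_{a∈A(s)} inf_{P∈𝒫(s,a)} ( r(s,a) + γ · ∑_{s'} P(s') · V(s') ). Then for all V, W : S → ℝ and all s ∈ S, |(T V)(s) − (T W)(s)| ≤ γ · max_{s'} |V(s') − W(s')|. In particular, for γ < 1 the robust Bellman operator is a γ-contraction in the supremum norm. -/
/-!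
Suprema and infima do not increase the uniform distance between two families of reals. For a
distribution `P` the returns `r + γ * 𝔼_P V` and `r + γ * 𝔼_P W` differ by at most
`|γ| * sup |V - W|`, and this bound passes through the infimum over `P` and then through the
supremum over actions. The families involved are bounded because `V` is at bounded distance from
the zero value function, for which the worst-case return is the reward itself.
-/

section ExtremaOfImages

variable {ι α : Type*} [AddCommGroup α] {s : Set ι} {f g : ι → α} {c : α}

section Lattice

variable [ConditionallyCompleteLattice α] [IsOrderedAddMonoid α]

theorem csSup_image_le_add_csSup_image (hs : s.Nonempty) (hg : BddAbove (g '' s))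
    (h : ∀ i ∈ s, f i ≤ c + g i) : sSup (f '' s) ≤ c + sSup (g '' s) := by
  refine csSup_le (hs.image f) (Set.forall_mem_image.2 fun i hi => (h i hi).trans ?_)
  gcongr
  exact le_csSup hg (Set.mem_image_of_mem g hi)

theorem csInf_image_le_add_csInf_image (hs : s.Nonempty) (hf : BddBelow (f '' s))
    (h : ∀ i ∈ s, f i ≤ c + g i) : sInf (f '' s) ≤ c + sInf (g '' s) := by
  rw [← sub_le_iff_le_add']
  refine le_csInf (hs.image g) (Set.forall_mem_image.2 fun i hi => ?_)
  rw [sub_le_iff_le_add']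
  exact (csInf_le hf (Set.mem_image_of_mem f hi)).trans (h i hi)

end Lattice

section LinearOrder

variable [ConditionallyCompleteLinearOrder α] [IsOrderedAddMonoid α]

theorem abs_csSup_image_sub_csSup_image_le (hs : s.Nonempty) (hf : BddAbove (f '' s))
    (hg : BddAbove (g '' s)) (h : ∀ i ∈ s, |f i - g i| ≤ c) :
    |sSup (f '' s) - sSup (g '' s)| ≤ c := by
  simp only [abs_sub_le_iff, sub_le_iff_le_add] at h ⊢
  exact ⟨csSup_image_le_add_csSup_image hs hg fun i hi => (h i hi).1,
    csSup_image_le_add_csSup_image hs hf fun i hi => (h i hi).2⟩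

theorem abs_csInf_image_sub_csInf_image_le (hs : s.Nonempty) (hf : BddBelow (f '' s))
    (hg : BddBelow (g '' s)) (h : ∀ i ∈ s, |f i - g i| ≤ c) :
    |sInf (f '' s) - sInf (g '' s)| ≤ c := by
  simp only [abs_sub_le_iff, sub_le_iff_le_add] at h ⊢
  exact ⟨csInf_image_le_add_csInf_image hs hf fun i hi => (h i hi).1,
    csInf_image_le_add_csInf_image hs hg fun i hi => (h i hi).2⟩

end LinearOrder

end ExtremaOfImages

/-- The discrete probability distributions on an arbitrary type, encoded by their mass functions.
This extends `stdSimplex ℝ S` to infinite `S`. -/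
def discreteSimplex (S : Type*) : Set (S → ℝ) :=
  {P | (∀ s, 0 ≤ P s) ∧ HasSum P 1}

theorem stdSimplex_subset_discreteSimplex (S : Type*) [Fintype S] :
    stdSimplex ℝ S ⊆ discreteSimplex S :=
  fun P hP => ⟨hP.1, hP.2 ▸ hasSum_fintype P⟩

section RobustBellman

variable {S Act : Type*} {P V W : S → ℝ} {U : Set (S → ℝ)} {r γ C : ℝ}

theorem summable_mul_of_mem_discreteSimplex (hP : P ∈ discreteSimplex S)
    (hV : Bornology.IsBounded (Set.range V)) : Summable fun s => P s * V s := by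
  obtain ⟨M, hM⟩ := hV.exists_norm_le
  refine (hP.2.summable.mul_right M).of_norm_bounded fun s => ?_
  rw [norm_mul, Real.norm_of_nonneg (hP.1 s)]
  exact mul_le_mul_of_nonneg_left (hM _ (Set.mem_range_self s)) (hP.1 s)

theorem abs_tsum_mul_sub_tsum_mul_le (hP : P ∈ discreteSimplex S)
    (hV : Bornology.IsBounded (Set.range V)) (hW : Bornology.IsBounded (Set.range W))
    (h : ∀ s, |V s - W s| ≤ C) : |∑' s, P s * V s - ∑' s, P s * W s| ≤ C := by
  rw [← Real.norm_eq_abs, ← (summable_mul_of_mem_discreteSimplex hP hV).tsum_sub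
    (summable_mul_of_mem_discreteSimplex hP hW)]
  have hC : HasSum (fun s => P s * C) C := by simpa only [one_mul] using hP.2.mul_right C
  refine tsum_of_norm_bounded hC fun s => ?_
  rw [← mul_sub, norm_mul, Real.norm_of_nonneg (hP.1 s)]
  exact mul_le_mul_of_nonneg_left (h s) (hP.1 s)

/-- The return `r + γ * 𝔼_P V` of a single action whose next state is drawn from `P`. -/
noncomputable def expectedReturn (r γ : ℝ) (V P : S → ℝ) : ℝ :=
  r + γ * ∑' s, P s * V s

/-- The worst-case return of a single action with uncertainty set `U`. -/
noncomputable def worstCaseReturn (r γ : ℝ) (U : Set (S → ℝ)) (V : S → ℝ) : ℝ :=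
  sInf (expectedReturn r γ V '' U)

/-- The robust Bellman operator, with arbitrary sets of available actions; the supremum over
actions takes the place of the maximum, and `sSup` returns `0` if it is infinite. -/
noncomputable def robustBellman (A : S → Set Act) (Unc : S → Act → Set (S → ℝ))
    (r : S → Act → ℝ) (γ : ℝ) (V : S → ℝ) (s : S) : ℝ :=
  sSup ((fun a => worstCaseReturn (r s a) γ (Unc s a) V) '' A s)

theorem robustBellman_eq_sup' [Fintype S] {A : S → Finset Act} {s : S} (hA : (A s).Nonempty)
    (Unc : S → Act → Set (S → ℝ)) (r : S → Act → ℝ) (γ : ℝ) (V : S → ℝ) :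
    robustBellman (fun s => (A s : Set Act)) Unc r γ V s = (A s).sup' hA fun a =>
      sInf ((fun P => r s a + γ * ∑ s', P s' * V s') '' Unc s a) := by
  simp +unfoldPartialApp only [robustBellman, worstCaseReturn, expectedReturn, tsum_fintype,
    Finset.sup'_eq_csSup_image]

theorem abs_expectedReturn_sub_le (hP : P ∈ discreteSimplex S)
    (hV : Bornology.IsBounded (Set.range V)) (hW : Bornology.IsBounded (Set.range W))
    (h : ∀ s, |V s - W s| ≤ C) :
    |expectedReturn r γ V P - expectedReturn r γ W P| ≤ |γ| * C := by
  rw [expectedReturn, expectedReturn, add_sub_add_left_eq_sub, ← mul_sub, abs_mul]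
  exact mul_le_mul_of_nonneg_left (abs_tsum_mul_sub_tsum_mul_le hP hV hW h) (abs_nonneg γ)

theorem expectedReturn_zero : expectedReturn r γ (0 : S → ℝ) = fun _ => r := by
  ext P
  simp [expectedReturn]

theorem worstCaseReturn_zero (hne : U.Nonempty) : worstCaseReturn r γ U 0 = r := by
  simp [worstCaseReturn, expectedReturn_zero, hne.image_const]

theorem isBounded_range_zero : Bornology.IsBounded (Set.range (0 : S → ℝ)) :=
  Bornology.isBounded_singleton.subset Set.range_const_subset

theorem bddBelow_expectedReturn_image (hU : U ⊆ discreteSimplex S)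
    (hV : Bornology.IsBounded (Set.range V)) : BddBelow (expectedReturn r γ V '' U) := by
  obtain ⟨M, hM⟩ := hV.exists_norm_le
  refine ⟨r - |γ| * M, Set.forall_mem_image.2 fun P hP => ?_⟩
  have h_zero := abs_expectedReturn_sub_le (r := r) (γ := γ) (hU hP) hV isBounded_range_zero
    fun s => by simpa using hM _ (Set.mem_range_self s)
  rw [expectedReturn_zero] at h_zero
  exact sub_le_of_abs_sub_le_left h_zero

theorem abs_worstCaseReturn_sub_le (hne : U.Nonempty) (hU : U ⊆ discreteSimplex S)
    (hV : Bornology.IsBounded (Set.range V)) (hW : Bornology.IsBounded (Set.range W))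
    (h : ∀ s, |V s - W s| ≤ C) :
    |worstCaseReturn r γ U V - worstCaseReturn r γ U W| ≤ |γ| * C :=
  abs_csInf_image_sub_csInf_image_le hne (bddBelow_expectedReturn_image hU hV)
    (bddBelow_expectedReturn_image hU hW) fun _ hP => abs_expectedReturn_sub_le (hU hP) hV hW h

theorem bddAbove_worstCaseReturn_image {A : Set Act} {Unc : Act → Set (S → ℝ)} {r : Act → ℝ}
    (hr : BddAbove (r '' A)) (hne : ∀ a ∈ A, (Unc a).Nonempty)
    (hUnc : ∀ a ∈ A, Unc a ⊆ discreteSimplex S) (hV : Bornology.IsBounded (Set.range V)) :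
    BddAbove ((fun a => worstCaseReturn (r a) γ (Unc a) V) '' A) := by
  obtain ⟨R, hR⟩ := hr
  obtain ⟨M, hM⟩ := hV.exists_norm_le
  refine ⟨R + |γ| * M, Set.forall_mem_image.2 fun a ha => ?_⟩
  have h_zero := abs_worstCaseReturn_sub_le (r := r a) (γ := γ) (hne a ha) (hUnc a ha) hV
    isBounded_range_zero fun s => by simpa using hM _ (Set.mem_range_self s)
  rw [worstCaseReturn_zero (hne a ha)] at h_zero
  linarith [(abs_le.1 h_zero).2, hR (Set.mem_image_of_mem r ha)]

theorem stmt_9_general {A : S → Set Act} {Unc : S → Act → Set (S → ℝ)} {r : S → Act → ℝ} {s : S}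
    (hA : (A s).Nonempty) (hr : BddAbove (r s '' A s)) (hne : ∀ a ∈ A s, (Unc s a).Nonempty)
    (hUnc : ∀ a ∈ A s, Unc s a ⊆ discreteSimplex S)
    (hV : Bornology.IsBounded (Set.range V)) (hW : Bornology.IsBounded (Set.range W)) :
    |robustBellman A Unc r γ V s - robustBellman A Unc r γ W s| ≤
      |γ| * ⨆ s', |V s' - W s'| := by
  have hVW : BddAbove (Set.range fun s' => |V s' - W s'|) := by
    obtain ⟨M, hM⟩ := (hV.sub hW).exists_norm_le
    exact ⟨M, Set.forall_mem_range.2 fun s' =>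
      hM _ (Set.sub_mem_sub (Set.mem_range_self s') (Set.mem_range_self s'))⟩
  exact abs_csSup_image_sub_csSup_image_le hA (bddAbove_worstCaseReturn_image hr hne hUnc hV)
    (bddAbove_worstCaseReturn_image hr hne hUnc hW) fun a ha =>
      abs_worstCaseReturn_sub_le (hne a ha) (hUnc a ha) hV hW (le_ciSup hVW)

end RobustBellman

/-- The robust (max–min) Bellman operator is `γ`-Lipschitz in the supremum norm. -/
theorem stmt_9 (S : Type*) [Fintype S] [Nonempty S] (Act : Type*)
    (A : S → Finset Act) (hA : ∀ s, (A s).Nonempty)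
    (Unc : S → Act → Set (S → ℝ))
    (hUncne : ∀ s, ∀ a ∈ A s, (Unc s a).Nonempty)
    (hUnc : ∀ s, ∀ a ∈ A s, Unc s a ⊆ stdSimplex ℝ S)
    (r : S → Act → ℝ) (γ : ℝ) (hγ0 : 0 ≤ γ) (hγ1 : γ ≤ 1)
    (T : (S → ℝ) → S → ℝ)
    (hT : ∀ V s, T V s = (A s).sup' (hA s) fun a =>
      sInf ((fun P => r s a + γ * ∑ s', P s' * V s') '' Unc s a)) :
    ∀ (V W : S → ℝ) (s : S),
      |T V s - T W s| ≤
        γ * Finset.univ.sup' Finset.univ_nonempty (fun s' => |V s' - W s'|) := by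
  intro V W s
  simpa only [hT, robustBellman_eq_sup' (hA _), Finset.sup'_univ_eq_ciSup, abs_of_nonneg hγ0] using
    stmt_9_general (A := fun s => (A s : Set Act)) (r := r) (γ := γ)
      (hA s) ((A s).finite_toSet.image _).bddAbove (hUncne s)
      (fun a ha => (hUnc s a ha).trans (stdSimplex_subset_discreteSimplex S))
      (Set.finite_range V).isBounded (Set.finite_range W).isBounded
end

section
/- Let n ≥ 1, let P be in the standard probability simplex over Fin n, let p ∈ (0,1), let k ≥ 1 be a natural number, and let w : Fin n → ℝ with w i ≤ 1 for all i. Suppose there exists an index t with P t ≥ p and w t ≤ 1 − p^(2(k−1)). Then ∑ i P i · w i ≤ 1 − p^(2k−1). -/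
section OrderedRing

variable {R ι : Type*} [Fintype ι] [Ring R]

theorem sum_mul_le_sub_mul_sub_of_mem_stdSimplex [PartialOrder R] [IsOrderedRing R]
    {P w : ι → R} {b : R} (hP : P ∈ stdSimplex R ι) (hw : ∀ i, w i ≤ b) (t : ι) :
    ∑ i, P i * w i ≤ b - P t * (b - w t) := by
  obtain ⟨P_nonneg, P_sum⟩ := hP
  have average_gap : ∑ i, P i * (b - w i) = b - ∑ i, P i * w i := by
    simp only [mul_sub, Finset.sum_sub_distrib, ← Finset.sum_mul, P_sum, one_mul]
  have single_gap_le : P t * (b - w t) ≤ ∑ i, P i * (b - w i) :=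
    Finset.single_le_sum (f := fun i ↦ P i * (b - w i))
      (fun i _ ↦ mul_nonneg (P_nonneg i) (sub_nonneg.mpr (hw i))) (Finset.mem_univ t)
  exact le_sub_comm.mp (single_gap_le.trans_eq average_gap)

theorem sum_mul_le_sub_mul_of_mem_stdSimplex [PartialOrder R] [IsOrderedRing R]
    {P w : ι → R} {b c p : R} {t : ι} (hP : P ∈ stdSimplex R ι) (hw : ∀ i, w i ≤ b)
    (hc : 0 ≤ c) (hpt : p ≤ P t) (hwt : w t ≤ b - c) :
    ∑ i, P i * w i ≤ b - p * c :=
  calc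
    ∑ i, P i * w i ≤ b - P t * (b - w t) := sum_mul_le_sub_mul_sub_of_mem_stdSimplex hP hw t
    _ ≤ b - p * c := sub_le_sub_left (mul_le_mul hpt (le_sub_comm.mp hwt) hc (hP.1 t)) b

theorem stmt_11_general [LinearOrder R] [IsOrderedRing R]
    {P w : ι → R} {p : R} {k : ℕ} (hP : P ∈ stdSimplex R ι) (hk : 1 ≤ k) (hw : ∀ i, w i ≤ 1)
    (ht : ∃ t, p ≤ P t ∧ w t ≤ 1 - p ^ (2 * (k - 1))) :
    ∑ i, P i * w i ≤ 1 - p ^ (2 * k - 1) := by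
  obtain ⟨t, hpt, hwt⟩ := ht
  have exponent_eq : 2 * k - 1 = 2 * (k - 1) + 1 := by lia
  rw [exponent_eq, pow_succ']
  exact sum_mul_le_sub_mul_of_mem_stdSimplex hP hw ((even_two_mul (k - 1)).pow_nonneg p) hpt hwt

end OrderedRing

/-- One-step weighted inequality: if a distribution `P` puts mass at least `p` on an index
whose weight is at most `1 - p^(2(k-1))`, and all weights are at most 1, then the
`P`-average of the weights is at most `1 - p^(2k-1)`. -/
theorem stmt_11 (n : ℕ) (hn : 1 ≤ n)
    (P : Fin n → ℝ) (hP : P ∈ stdSimplex ℝ (Fin n))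
    (p : ℝ) (hp0 : 0 < p) (hp1 : p < 1)
    (k : ℕ) (hk : 1 ≤ k)
    (w : Fin n → ℝ) (hw : ∀ i, w i ≤ 1)
    (ht : ∃ t, p ≤ P t ∧ w t ≤ 1 - p ^ (2 * (k - 1))) :
    ∑ i, P i * w i ≤ 1 - p ^ (2 * k - 1) :=
  stmt_11_general hP hk hw ht
end
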